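/- For every partition λ ∈ P_n, the Schur polynomial satisfies the bialternant formula s_λ(x) = a_{ρ+λ}(x)/a_ρ(x); equivalently, a_ρ(x)·s_λ(x) = a_{ρ+λ}(x). -/

import Mathlib

open Finset MvPolynomial

attribute [local instance] Classical.propDecidable

/-- A partition in `P_n`: a weakly decreasing sequence of naturals. -/
def IsPartition {n : ℕ} (lam : Fin n → ℕ) : Prop := Antitone lam

/-- The cells of the Young diagram of `lam`, as pairs (row, column), 0-based. -/
noncomputable def cells {n : ℕ} (lam : Fin n → ℕ) : Finset (Fin n × ℕ) :=
  (Finset.univ ×ˢ Finset.range (Finset.univ.sup lam)).filter fun c => c.2 < lam c.1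

/-- Semistandardness for a filling with values in `Fin n` (0-based values):
rows weakly increase, columns strictly increase. -/
def IsSSYT {n : ℕ} (lam : Fin n → ℕ) (T : cells lam → Fin n) : Prop :=
  (∀ c d : cells lam, (c : Fin n × ℕ).1 = (d : Fin n × ℕ).1 →
      (c : Fin n × ℕ).2 ≤ (d : Fin n × ℕ).2 → T c ≤ T d) ∧
  (∀ c d : cells lam, (c : Fin n × ℕ).2 = (d : Fin n × ℕ).2 →
      (c : Fin n × ℕ).1 < (d : Fin n × ℕ).1 → T c < T d)

/-- The y-subscript `a + c(a) - r(a)` of a cell (1-based value and coordinates). -/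
def ysub {n : ℕ} (a : Fin n) (c : Fin n × ℕ) : ℤ := (a : ℤ) + 1 + (c.2 : ℤ) - ((c.1 : ℕ) : ℤ)

/-- The Schur polynomial `s_lam(x)`, in the ring with `x`-variables `Sum.inl i`
and `y`-variables `Sum.inr (i, k)` (family `i`, subscript `k`). -/
noncomputable def schur (n r : ℕ) (lam : Fin n → ℕ) :
    MvPolynomial (Fin n ⊕ Fin r × ℤ) ℤ :=
  ∑ T ∈ Finset.univ.filter (IsSSYT lam), ∏ c : cells lam, X (Sum.inl (T c))

/-- The factorial Schur polynomial `s_lam(x | y^{(i)})`. -/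
noncomputable def factSchur (n r : ℕ) (i : Fin r) (lam : Fin n → ℕ) :
    MvPolynomial (Fin n ⊕ Fin r × ℤ) ℤ :=
  ∑ T ∈ Finset.univ.filter (IsSSYT lam),
    ∏ c : cells lam,
      (X (Sum.inl (T c)) + X (Sum.inr (i, ysub (T c) (c : Fin n × ℕ))))

/-- A barred filling of a single Young diagram: an entry is a value in `Fin n`
(0-based) together with a `Bool` recording whether it is barred.  Rows weakly
increase and columns strictly increase in value, disregarding bars. -/
def IsBarred {n : ℕ} (lam : Fin n → ℕ) (T : cells lam → Fin n × Bool) : Prop :=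
  (∀ c d : cells lam, (c : Fin n × ℕ).1 = (d : Fin n × ℕ).1 →
      (c : Fin n × ℕ).2 ≤ (d : Fin n × ℕ).2 → (T c).1 ≤ (T d).1) ∧
  (∀ c d : cells lam, (c : Fin n × ℕ).2 = (d : Fin n × ℕ).2 →
      (c : Fin n × ℕ).1 < (d : Fin n × ℕ).1 → (T c).1 < (T d).1)

/-- A barred skew tableau of shape `λ̄ = (lam 0, …, lam (r-1))`: since consecutive
diagrams are placed strictly below and to the left of the preceding one, no two
diagrams share a row or a column, so such a tableau is exactly a tuple of barred
fillings of the individual diagrams. -/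
def IsBarredSkew {n r : ℕ} (lam : Fin r → Fin n → ℕ)
    (T : (i : Fin r) → cells (lam i) → Fin n × Bool) : Prop :=
  ∀ i, IsBarred (lam i) (T i)

/-- Unbarred content of a barred filling of one diagram. -/
noncomputable def content1 {n : ℕ} (lam : Fin n → ℕ) (T : cells lam → Fin n × Bool)
    (k : Fin n) : ℕ :=
  (Finset.univ.filter fun c : cells lam => T c = (k, false)).card

/-- Unbarred content `ω(T)` of a barred skew tableau. -/
noncomputable def contentT {n r : ℕ} (lam : Fin r → Fin n → ℕ)
    (T : (i : Fin r) → cells (lam i) → Fin n × Bool) (k : Fin n) : ℕ :=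
  ∑ i, content1 (lam i) (T i) k

/-- The monomial `c_T(y)` contributed by the barred entries of one diagram
(living in the ring of `y`-variables only). -/
noncomputable def cT1 {n : ℕ} (r : ℕ) (i : Fin r) (lam : Fin n → ℕ)
    (T : cells lam → Fin n × Bool) : MvPolynomial (Fin r × ℤ) ℤ :=
  ∏ c ∈ Finset.univ.filter (fun c : cells lam => (T c).2 = true),
    X (i, ysub (T c).1 (c : Fin n × ℕ))

/-- The monomial `c_T(y)` of a barred skew tableau. -/
noncomputable def cT {n r : ℕ} (lam : Fin r → Fin n → ℕ)
    (T : (i : Fin r) → cells (lam i) → Fin n × Bool) : MvPolynomial (Fin r × ℤ) ℤ :=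
  ∏ i, cT1 r i (lam i) (T i)

/-- The unbarred column word of a barred filling of one diagram: unbarred values
(0-based) read down each column, from the rightmost column to the leftmost. -/
noncomputable def colWord1 {n : ℕ} (lam : Fin n → ℕ)
    (T : cells lam → Fin n × Bool) : List ℕ :=
  ((List.range (Finset.univ.sup lam)).reverse).flatMap fun j =>
    (List.finRange n).filterMap fun i =>
      if h : (i, j) ∈ cells lam then
        (if (T ⟨(i, j), h⟩).2 = false then some ((T ⟨(i, j), h⟩).1 : ℕ) else none)
      else none

/-- The unbarred column word of a barred skew tableau: diagram `lam 0` is the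
rightmost, so its word comes first. -/
noncomputable def colWord {n r : ℕ} (lam : Fin r → Fin n → ℕ)
    (T : (i : Fin r) → cells (lam i) → Fin n × Bool) : List ℕ :=
  (List.finRange r).flatMap fun i => colWord1 (lam i) (T i)

/-- A word (with 0-based values) is Yamanouchi if every initial segment contains
at least as many `k`'s as `(k+1)`'s, for every `k`. -/
def IsYam (w : List ℕ) : Prop :=
  ∀ t k, ((w.take t).count (k + 1)) ≤ (w.take t).count k

/-- The alternant `a_ξ(x) = det[(x_i)^{ξ_j}]`. -/
noncomputable def avand (n r : ℕ) (xi : Fin n → ℕ) :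
    MvPolynomial (Fin n ⊕ Fin r × ℤ) ℤ :=
  Matrix.det (Matrix.of fun i j : Fin n =>
    (X (Sum.inl i) : MvPolynomial (Fin n ⊕ Fin r × ℤ) ℤ) ^ xi j)

/-- `ρ = (n-1, n-2, …, 0)`. -/
def rhoPart (n : ℕ) : Fin n → ℕ := fun i => n - 1 - (i : ℕ)

/-- The Schur polynomial in the `x`-variables only. -/
noncomputable def schurX (n : ℕ) (lam : Fin n → ℕ) : MvPolynomial (Fin n) ℤ :=
  ∑ T ∈ Finset.univ.filter (IsSSYT lam), ∏ c : cells lam, X (T c)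

/-- The alternant `a_ξ(x)` in the `x`-variables only. -/
noncomputable def avandX (n : ℕ) (xi : Fin n → ℕ) : MvPolynomial (Fin n) ℤ :=
  Matrix.det (Matrix.of fun i j : Fin n => (X i : MvPolynomial (Fin n) ℤ) ^ xi j)

/-!
Both sides are computed by peeling off the last variable `y`. In a semistandard tableau of shape
`λ` the entries different from the largest letter fill a partition `μ` interlacing `λ`, whence
`s_λ(x, y) = ∑_μ y^(|λ| - |μ|) s_μ(x)`. Subtracting from each column of the alternant the multiple
of the next column that kills its last entry leaves geometric sums, and expanding these by
multilinearity gives `a_{ρ+λ}(x, y) = ∏ᵢ (xᵢ - y) ∑_μ y^(|λ| - |μ|) a_{ρ+μ}(x)` with the same `μ`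
and the same weights. The case `λ = 0` of the latter is `a_ρ(x, y) = ∏ᵢ (xᵢ - y) a_ρ(x)`, so the
formula follows by induction on the number of variables.
-/

section Determinant

variable {R : Type*} [CommRing R] {n : ℕ}

theorem det_eq_of_forall_col_eq_smul_add_succ {A B : Matrix (Fin (n + 1)) (Fin (n + 1)) R}
    (c : Fin n → R) (A_last : ∀ i, A i (Fin.last n) = B i (Fin.last n))
    (A_castSucc : ∀ i (j : Fin n), A i j.castSucc = B i j.castSucc + c j * A i j.succ) :
    A.det = B.det := by
  rw [← Matrix.det_submatrix_equiv_self Fin.revPerm A,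
    ← Matrix.det_submatrix_equiv_self Fin.revPerm B]
  refine Matrix.det_eq_of_forall_col_eq_smul_add_pred (fun j => c j.rev) ?_ ?_
  · intro i
    simp [A_last]
  · intro i j
    simp [Fin.rev_succ, Fin.rev_castSucc, A_castSucc]

theorem det_eq_mul_det_castSucc_of_last_row_eq_zero (A : Matrix (Fin (n + 1)) (Fin (n + 1)) R)
    (h : ∀ j : Fin n, A (Fin.last n) j.castSucc = 0) :
    A.det = A (Fin.last n) (Fin.last n) * (A.submatrix Fin.castSucc Fin.castSucc).det := by
  rw [Matrix.det_succ_row A (Fin.last n), Fin.sum_univ_castSucc]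
  simp [h, Fin.succAbove_last, ← two_mul]

theorem det_of_sum_col {ι α : Type*} [Fintype ι] [DecidableEq ι] (s : ι → Finset α)
    (f : ι → ι → α → R) :
    (Matrix.of fun i j => ∑ m ∈ s j, f i j m).det =
      ∑ ν ∈ Fintype.piFinset s, (Matrix.of fun i j => f i j (ν j)).det := by
  calc (Matrix.of fun i j => ∑ m ∈ s j, f i j m).det
    _ = (Matrix.of fun j => ∑ m ∈ s j, fun i => f i j m).det := by
      rw [← Matrix.det_transpose]
      congr 1
      ext j i
      simp
    _ = ∑ ν ∈ Fintype.piFinset s, (Matrix.of fun j i => f i j (ν j)).det :=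
      Matrix.detRowAlternating.toMultilinearMap.map_sum_finset (fun j m i => f i j m) s
    _ = ∑ ν ∈ Fintype.piFinset s, (Matrix.of fun i j => f i j (ν j)).det :=
      sum_congr rfl fun _ _ => (Matrix.det_transpose _).symm

end Determinant

section Alternant

variable {R : Type*} [CommRing R] {n : ℕ}

/-- The alternant `a_ξ` evaluated at a point `x` of a commutative ring; `avandX` is its value at
the variables of the polynomial ring. -/
noncomputable def alternant (x : Fin n → R) (ξ : Fin n → ℕ) : R :=
  (Matrix.of fun i j => x i ^ ξ j).det

theorem alternant_succ_eq_mul_det (x : Fin (n + 1) → R) {ξ : Fin (n + 1) → ℕ} (hξ : Antitone ξ) :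
    alternant x ξ = x (Fin.last n) ^ ξ (Fin.last n) *
      ((∏ i : Fin n, (x i.castSucc - x (Fin.last n))) *
        (Matrix.of fun i j : Fin n => ∑ m ∈ Ico (ξ j.succ) (ξ j.castSucc),
          x i.castSucc ^ m * x (Fin.last n) ^ (ξ j.castSucc - 1 - m)).det) := by
  set y := x (Fin.last n) with hy
  let B : Matrix (Fin (n + 1)) (Fin (n + 1)) R := Matrix.of fun i =>
    Fin.lastCases (x i ^ ξ (Fin.last n)) fun j =>
      (x i - y) * ∑ m ∈ Ico (ξ j.succ) (ξ j.castSucc), x i ^ m * y ^ (ξ j.castSucc - 1 - m)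
  have column_operations : alternant x ξ = B.det := by
    refine det_eq_of_forall_col_eq_smul_add_succ
      (fun j => y ^ (ξ j.castSucc - ξ j.succ)) (fun i => by simp [B]) fun i j => ?_
    simp only [B, Matrix.of_apply, Fin.lastCases_castSucc,
      mul_geom_sum₂_Ico (x i) y (hξ Fin.castSucc_lt_succ.le)]
    ring
  have last_row (j : Fin n) : B (Fin.last n) j.castSucc = 0 := by simp [B, hy]
  rw [column_operations, det_eq_mul_det_castSucc_of_last_row_eq_zero B last_row,
    ← Matrix.det_mul_column]
  congr 2
  · simp [B, hy]
  · ext i j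
    simp [B]

theorem alternant_succ (x : Fin (n + 1) → R) {ξ : Fin (n + 1) → ℕ} (hξ : Antitone ξ) :
    alternant x ξ = (∏ i : Fin n, (x i.castSucc - x (Fin.last n))) *
      ∑ ν ∈ Fintype.piFinset fun j : Fin n => Ico (ξ j.succ) (ξ j.castSucc),
        x (Fin.last n) ^ (ξ (Fin.last n) + ∑ j, (ξ j.castSucc - 1 - ν j)) *
          alternant (x ∘ Fin.castSucc) ν := by
  rw [alternant_succ_eq_mul_det x hξ, det_of_sum_col, mul_left_comm, mul_sum]
  refine congrArg _ (sum_congr rfl fun ν _ => ?_)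
  rw [pow_add, mul_assoc, ← prod_pow_eq_pow_sum, alternant, ← Matrix.det_mul_row]
  simp only [Matrix.of_apply, Function.comp_apply, mul_comm]

end Alternant

section Interlacing

variable {n : ℕ} {lam : Fin (n + 1) → ℕ} {μ : Fin n → ℕ}

/-- The `μ` interlacing `lam`, that is `lam (j + 1) ≤ μ j ≤ lam j` for all `j`: the shapes left
when a horizontal strip containing the whole last row is removed from `lam`. -/
noncomputable def interlacing (lam : Fin (n + 1) → ℕ) : Finset (Fin n → ℕ) :=
  Fintype.piFinset fun j => Icc (lam j.succ) (lam j.castSucc)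

/-- The number `|lam| - |μ|` of cells of the skew diagram `lam / μ`, computed row by row so that
the truncated subtractions are exact when `μ` is contained in `lam`. -/
def skewSize (lam : Fin (n + 1) → ℕ) (μ : Fin n → ℕ) : ℕ :=
  lam (Fin.last n) + ∑ j, (lam j.castSucc - μ j)

theorem mem_interlacing :
    μ ∈ interlacing lam ↔ ∀ j, lam j.succ ≤ μ j ∧ μ j ≤ lam j.castSucc := by
  simp [interlacing]

theorem antitone_of_mem_interlacing (hμ : μ ∈ interlacing lam) : Antitone lam :=
  Fin.antitone_iff_succ_le.2 fun j => (mem_interlacing.1 hμ j).1.trans (mem_interlacing.1 hμ j).2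

theorem le_apply_of_mem_interlacing (hμ : μ ∈ interlacing lam) {i : Fin n} {i' : Fin (n + 1)}
    (h : i.castSucc < i') : lam i' ≤ μ i :=
  (antitone_of_mem_interlacing hμ (Fin.castSucc_lt_iff_succ_le.1 h)).trans
    (mem_interlacing.1 hμ i).1

theorem isPartition_of_mem_interlacing (hμ : μ ∈ interlacing lam) : IsPartition μ := by
  intro i j hij
  rcases hij.eq_or_lt with rfl | hlt
  · exact le_rfl
  · exact (mem_interlacing.1 hμ j).2.trans
      (le_apply_of_mem_interlacing hμ (Fin.castSucc_lt_castSucc_iff.2 hlt))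

theorem interlacing_zero : interlacing (0 : Fin (n + 1) → ℕ) = {0} := by
  ext μ
  simp [mem_interlacing, funext_iff]

end Interlacing

section AlternantBranching

variable {n : ℕ}

theorem rhoPart_castSucc (j : Fin n) : rhoPart (n + 1) j.castSucc = rhoPart n j + 1 := by
  simp only [rhoPart, Fin.val_castSucc]
  omega

theorem rhoPart_succ (j : Fin n) : rhoPart (n + 1) j.succ = rhoPart n j := by
  simp only [rhoPart, Fin.val_succ]
  omega

theorem rhoPart_last : rhoPart (n + 1) (Fin.last n) = 0 := by
  simp [rhoPart]

theorem antitone_rhoPart : Antitone (rhoPart n) :=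
  fun _ _ hij => Nat.sub_le_sub_left hij _

theorem alternant_rhoPart_add_succ {R : Type*} [CommRing R] (x : Fin (n + 1) → R)
    {lam : Fin (n + 1) → ℕ} (hlam : IsPartition lam) :
    alternant x (rhoPart (n + 1) + lam) = (∏ i : Fin n, (x i.castSucc - x (Fin.last n))) *
      ∑ μ ∈ interlacing lam,
        x (Fin.last n) ^ skewSize lam μ * alternant (x ∘ Fin.castSucc) (rhoPart n + μ) := by
  have antitone_add : Antitone (rhoPart (n + 1) + lam) := antitone_rhoPart.add hlam
  rw [alternant_succ x antitone_add]
  congr 1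
  refine (sum_bij' (fun μ _ => rhoPart n + μ) (fun ν _ => ν - rhoPart n) ?_ ?_ ?_ ?_ ?_).symm
  · intro μ hμ
    simp only [Fintype.mem_piFinset, mem_Ico, Pi.add_apply, rhoPart_castSucc, rhoPart_succ]
    intro j
    have := mem_interlacing.1 hμ j
    omega
  · intro ν hν
    simp only [Fintype.mem_piFinset, mem_Ico, Pi.add_apply, rhoPart_castSucc, rhoPart_succ] at hν
    refine mem_interlacing.2 fun j => ?_
    have := hν j
    simp only [Pi.sub_apply]
    omega
  · intro μ _
    exact add_tsub_cancel_left _ _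
  · intro ν hν
    simp only [Fintype.mem_piFinset, mem_Ico, Pi.add_apply, rhoPart_succ] at hν
    exact add_tsub_cancel_of_le fun j => le_self_add.trans (hν j).1
  · intro μ _
    simp only [skewSize, Pi.add_apply, rhoPart_castSucc, rhoPart_last, zero_add]
    congr! 4 with j
    omega

theorem alternant_rhoPart_succ {R : Type*} [CommRing R] (x : Fin (n + 1) → R) :
    alternant x (rhoPart (n + 1)) =
      (∏ i : Fin n, (x i.castSucc - x (Fin.last n))) *
        alternant (x ∘ Fin.castSucc) (rhoPart n) := by
  simpa [interlacing_zero, skewSize] using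
    alternant_rhoPart_add_succ x (lam := 0) antitone_const

end AlternantBranching

section Cells

variable {n : ℕ} {lam : Fin n → ℕ}

theorem mem_cells {c : Fin n × ℕ} : c ∈ cells lam ↔ c.2 < lam c.1 := by
  simp only [cells, mem_filter, mem_product, mem_univ, mem_range, true_and, and_iff_right_iff_imp]
  exact fun h => h.trans_le (le_sup (f := lam) (mem_univ c.1))

theorem prod_cells {M : Type*} [CommMonoid M] (lam : Fin n → ℕ) (f : Fin n × ℕ → M) :
    ∏ c : cells lam, f c = ∏ i, ∏ k ∈ range (lam i), f (i, k) := by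
  rw [prod_coe_sort (cells lam) f]
  exact prod_finset_product _ _ _ fun c => by simp [mem_cells]

theorem IsSSYT.row_le_apply (hlam : IsPartition lam) {T : cells lam → Fin n} (hT : IsSSYT lam T)
    (c : cells lam) : c.1.1 ≤ T c := by
  obtain ⟨⟨i, k⟩, hc⟩ := c
  induction i using WellFoundedLT.induction with
  | ind i ih =>
    refine le_of_forall_lt fun i' hi' => ?_
    have hc' : (i', k) ∈ cells lam := mem_cells.2 ((mem_cells.1 hc).trans_le (hlam hi'.le))
    exact (ih i' hi' hc').trans_lt (hT.2 ⟨_, hc'⟩ ⟨_, hc⟩ rfl hi')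

end Cells

section Branching

variable {n : ℕ} {lam : Fin (n + 1) → ℕ} {μ : Fin n → ℕ}

/-- The filling obtained from a filling `U` of shape `μ` by writing the largest letter in all
other positions. It is defined on all positions, to be restricted to the cells of a shape
containing `μ`. -/
noncomputable def extendByLast (U : cells μ → Fin n) (p : Fin (n + 1) × ℕ) : Fin (n + 1) :=
  Fin.lastCases (motive := fun _ => Fin (n + 1)) (Fin.last n)
    (fun i => if h : p.2 < μ i then (U ⟨(i, p.2), mem_cells.2 h⟩).castSucc else Fin.last n) p.1

theorem extendByLast_last (U : cells μ → Fin n) (k : ℕ) :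
    extendByLast U (Fin.last n, k) = Fin.last n := by
  simp [extendByLast]

theorem extendByLast_of_lt (U : cells μ → Fin n) {i : Fin n} {k : ℕ} (h : k < μ i) :
    extendByLast U (i.castSucc, k) = (U ⟨(i, k), mem_cells.2 h⟩).castSucc := by
  simp [extendByLast, h]

theorem extendByLast_of_le (U : cells μ → Fin n) {i : Fin n} {k : ℕ} (h : μ i ≤ k) :
    extendByLast U (i.castSucc, k) = Fin.last n := by
  simp [extendByLast, h.not_gt]

theorem monotone_extendByLast_row {U : cells μ → Fin n} (hU : IsSSYT μ U) (i : Fin (n + 1)) :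
    Monotone fun k => extendByLast U (i, k) := by
  intro k k' hk
  induction i using Fin.lastCases with
  | last => simp [extendByLast_last]
  | cast i =>
    rcases lt_or_ge k' (μ i) with hk' | hk'
    · simp only [extendByLast_of_lt U hk', extendByLast_of_lt U (hk.trans_lt hk'),
        Fin.castSucc_le_castSucc_iff]
      exact hU.1 _ _ rfl hk
    · simp only [extendByLast_of_le U hk', Fin.le_last]

theorem extendByLast_lt_of_row_lt {U : cells μ → Fin n} (hU : IsSSYT μ U) {i : Fin n}
    {i' : Fin (n + 1)} {k : ℕ} (hk : k < μ i) (hi : i.castSucc < i') :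
    extendByLast U (i.castSucc, k) < extendByLast U (i', k) := by
  rw [extendByLast_of_lt U hk]
  induction i' using Fin.lastCases with
  | last => simpa only [extendByLast_last] using Fin.castSucc_lt_last _
  | cast i' =>
    rcases lt_or_ge k (μ i') with hk' | hk'
    · rw [extendByLast_of_lt U hk', Fin.castSucc_lt_castSucc_iff]
      exact hU.2 ⟨(i, k), _⟩ ⟨(i', k), _⟩ rfl (Fin.castSucc_lt_castSucc_iff.1 hi)
    · simpa only [extendByLast_of_le U hk'] using Fin.castSucc_lt_last _

theorem isSSYT_extendByLast (hμ : μ ∈ interlacing lam) {U : cells μ → Fin n} (hU : IsSSYT μ U) :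
    IsSSYT lam fun c => extendByLast U c := by
  constructor
  · rintro ⟨⟨i, k⟩, _⟩ ⟨⟨_, k'⟩, _⟩ rfl hk
    exact monotone_extendByLast_row hU i hk
  · rintro ⟨⟨i, k⟩, _⟩ ⟨⟨i', _⟩, hd⟩ rfl hi
    obtain ⟨i, rfl⟩ := Fin.exists_castSucc_eq.2 (Fin.ne_last_of_lt hi)
    exact extendByLast_lt_of_row_lt hU
      ((mem_cells.1 hd).trans_le (le_apply_of_mem_interlacing hμ hi)) hi

theorem extendByLast_injective (hμ : ∀ i, μ i ≤ lam i.castSucc) :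
    Function.Injective fun (U : cells μ → Fin n) (c : cells lam) => extendByLast U c := by
  intro U V hUV
  funext ⟨⟨i, k⟩, hc⟩
  have hk : k < μ i := mem_cells.1 hc
  have hc' : (i.castSucc, k) ∈ cells lam := mem_cells.2 (hk.trans_le (hμ i))
  simpa [extendByLast_of_lt _ hk] using congrFun hUV ⟨_, hc'⟩

theorem prod_extendByLast {M : Type*} [CommMonoid M] (x : Fin (n + 1) → M)
    (hμ : ∀ i, μ i ≤ lam i.castSucc) (U : cells μ → Fin n) :
    ∏ c : cells lam, x (extendByLast U c) =
      x (Fin.last n) ^ skewSize lam μ * ∏ c : cells μ, x (U c).castSucc := by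
  have row (i : Fin n) : ∏ k ∈ range (lam i.castSucc), x (extendByLast U (i.castSucc, k)) =
      x (Fin.last n) ^ (lam i.castSucc - μ i) *
        ∏ k ∈ range (μ i), x (extendByLast U (i.castSucc, k)) := by
    rw [← prod_range_mul_prod_Ico _ (hμ i), mul_comm, ← Nat.card_Ico, ← prod_const]
    refine congrArg (· * _) (prod_congr rfl fun k hk => ?_)
    rw [extendByLast_of_le U (mem_Ico.1 hk).1]
  have inner : ∏ c : cells μ, x (U c).castSucc =
      ∏ i, ∏ k ∈ range (μ i), x (extendByLast U (i.castSucc, k)) := by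
    rw [← prod_cells μ fun p => x (extendByLast U (p.1.castSucc, p.2))]
    exact prod_congr rfl fun c _ => by rw [extendByLast_of_lt U (mem_cells.1 c.2)]
  rw [prod_cells lam fun p => x (extendByLast U p), Fin.prod_univ_castSucc, inner]
  simp only [row, extendByLast_last, prod_const, card_range, prod_mul_distrib, skewSize, pow_add,
    prod_pow_eq_pow_sum]
  rw [mul_comm, ← mul_assoc]

/-- The shape formed by the entries of `T` different from the largest letter: the length of row
`j` is the first column that lies outside the diagram or contains the largest letter. The last row
is left out, since in a semistandard tableau it consists of largest letters only. -/
noncomputable def innerShape (T : cells lam → Fin (n + 1)) (j : Fin n) : ℕ :=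
  sInf {k | ∀ h : (j.castSucc, k) ∈ cells lam, T ⟨_, h⟩ = Fin.last n}

theorem innerShape_extendByLast (hμ : ∀ i, μ i ≤ lam i.castSucc) (U : cells μ → Fin n) :
    innerShape (fun c : cells lam => extendByLast U c) = μ := by
  funext j
  have last_iff (k : ℕ) :
      (∀ _ : (j.castSucc, k) ∈ cells lam, extendByLast U (j.castSucc, k) = Fin.last n) ↔
        μ j ≤ k := by
    refine ⟨fun h => ?_, fun h _ => extendByLast_of_le U h⟩
    by_contra! hk
    have hlast := h (mem_cells.2 (hk.trans_le (hμ j)))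
    rw [extendByLast_of_lt U hk] at hlast
    exact (Fin.castSucc_lt_last _).ne hlast
  simp only [innerShape, last_iff]
  exact csInf_Ici

variable {T : cells lam → Fin (n + 1)}

theorem IsSSYT.lt_innerShape_iff (hT : IsSSYT lam T) {j : Fin n} {k : ℕ} :
    k < innerShape T j ↔ ∃ h : (j.castSucc, k) ∈ cells lam, T ⟨_, h⟩ ≠ Fin.last n := by
  have mem_iff : k ∈ {k | ∀ h : (j.castSucc, k) ∈ cells lam, T ⟨_, h⟩ = Fin.last n} ↔
      innerShape T j ≤ k := by
    refine ⟨fun h => Nat.sInf_le h, fun hk h => ?_⟩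
    have nonempty : {k | ∀ h : (j.castSucc, k) ∈ cells lam, T ⟨_, h⟩ = Fin.last n}.Nonempty :=
      ⟨lam j.castSucc, fun h => absurd (mem_cells.1 h) (lt_irrefl _)⟩
    have h' : (j.castSucc, innerShape T j) ∈ cells lam :=
      mem_cells.2 (hk.trans_lt (mem_cells.1 h))
    exact Fin.last_le_iff.1 ((Nat.sInf_mem nonempty h').ge.trans (hT.1 ⟨_, h'⟩ ⟨_, h⟩ rfl hk))
  simpa only [Set.mem_ofPred_eq, not_forall, not_le] using mem_iff.not.symm

theorem IsSSYT.innerShape_mem_interlacing (hlam : IsPartition lam) (hT : IsSSYT lam T) :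
    innerShape T ∈ interlacing lam := by
  refine mem_interlacing.2 fun j => ⟨le_of_forall_lt fun k hk => ?_, le_of_forall_lt fun k hk => ?_⟩
  · have below : (j.succ, k) ∈ cells lam := mem_cells.2 hk
    have above : (j.castSucc, k) ∈ cells lam :=
      mem_cells.2 (hk.trans_le (hlam Fin.castSucc_lt_succ.le))
    exact hT.lt_innerShape_iff.2
      ⟨above, Fin.ne_last_of_lt (hT.2 ⟨_, above⟩ ⟨_, below⟩ rfl Fin.castSucc_lt_succ)⟩
  · obtain ⟨h, -⟩ := hT.lt_innerShape_iff.1 hk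
    exact mem_cells.1 h

theorem IsSSYT.exists_castSucc_eq_apply (hT : IsSSYT lam T) (c : cells (innerShape T)) :
    ∃ a : Fin n, ∃ h : (c.1.1.castSucc, c.1.2) ∈ cells lam, a.castSucc = T ⟨_, h⟩ := by
  obtain ⟨h, hne⟩ := hT.lt_innerShape_iff.1 (mem_cells.1 c.2)
  exact ⟨(T ⟨_, h⟩).castPred hne, h, Fin.castSucc_castPred _ hne⟩

theorem IsSSYT.exists_extendByLast_eq (hlam : IsPartition lam) (hT : IsSSYT lam T) :
    ∃ U, IsSSYT (innerShape T) U ∧ (fun c : cells lam => extendByLast U c) = T := by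
  choose U mem_cells_lam castSucc_U using hT.exists_castSucc_eq_apply
  refine ⟨U, ⟨fun c d hrow hcol => ?_, fun c d hcol hrow => ?_⟩, funext fun ⟨⟨i, k⟩, hc⟩ => ?_⟩
  · rw [← Fin.castSucc_le_castSucc_iff, castSucc_U, castSucc_U]
    exact hT.1 _ _ (congrArg Fin.castSucc hrow) hcol
  · rw [← Fin.castSucc_lt_castSucc_iff, castSucc_U, castSucc_U]
    exact hT.2 _ _ hcol (Fin.castSucc_lt_castSucc_iff.2 hrow)
  · induction i using Fin.lastCases with
    | last =>
      rw [extendByLast_last]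
      exact (Fin.last_le_iff.1 (hT.row_le_apply hlam ⟨_, hc⟩)).symm
    | cast i =>
      rcases lt_or_ge k (innerShape T i) with hk | hk
      · rw [extendByLast_of_lt U hk]
        exact castSucc_U ⟨(i, k), mem_cells.2 hk⟩
      · rw [extendByLast_of_le U hk]
        by_contra hne
        exact hk.not_gt (hT.lt_innerShape_iff.2 ⟨hc, Ne.symm hne⟩)

end Branching

section Schur

variable {R : Type*} {n : ℕ}

/-- The Schur polynomial `s_lam` evaluated at a point `x` of a commutative semiring; `schurX` is
its value at the variables of the polynomial ring. -/
noncomputable def schurEval [CommSemiring R] (x : Fin n → R) (lam : Fin n → ℕ) : R :=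
  ∑ T ∈ univ.filter (IsSSYT lam), ∏ c : cells lam, x (T c)

theorem schurEval_fin_zero [CommSemiring R] (x : Fin 0 → R) (lam : Fin 0 → ℕ) :
    schurEval x lam = 1 := by
  have : IsEmpty (cells lam) := ⟨fun c => c.1.1.elim0⟩
  have isSSYT (T : cells lam → Fin 0) : IsSSYT lam T := ⟨isEmptyElim, isEmptyElim⟩
  simp [schurEval, isSSYT]

theorem schurEval_succ [CommSemiring R] (x : Fin (n + 1) → R) {lam : Fin (n + 1) → ℕ}
    (hlam : IsPartition lam) :
    schurEval x lam = ∑ μ ∈ interlacing lam,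
      x (Fin.last n) ^ skewSize lam μ * schurEval (x ∘ Fin.castSucc) μ := by
  rw [schurEval, ← sum_fiberwise_of_maps_to (g := innerShape) (t := interlacing lam)
    fun T hT => (mem_filter.1 hT).2.innerShape_mem_interlacing hlam]
  refine sum_congr rfl fun μ hμ => ?_
  have hμ_le : ∀ i, μ i ≤ lam i.castSucc := fun j => (mem_interlacing.1 hμ j).2
  rw [schurEval, mul_sum]
  symm
  refine sum_bij (fun U _ c => extendByLast U c) ?_ ?_ ?_ ?_
  · intro U hU
    simp only [mem_filter, mem_univ, true_and] at hU ⊢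
    exact ⟨isSSYT_extendByLast hμ hU, innerShape_extendByLast hμ_le U⟩
  · exact fun U _ V _ hUV => extendByLast_injective hμ_le hUV
  · intro T hT
    simp only [mem_filter, mem_univ, true_and] at hT
    obtain ⟨hT, rfl⟩ := hT
    obtain ⟨U, hU, hUT⟩ := hT.exists_extendByLast_eq hlam
    exact ⟨U, by simpa using hU, hUT⟩
  · exact fun U _ => (prod_extendByLast x hμ_le U).symm

theorem bialternant_formula_general [CommRing R] (x : Fin n → R) {lam : Fin n → ℕ}
    (hlam : IsPartition lam) :
    alternant x (rhoPart n) * schurEval x lam = alternant x (rhoPart n + lam) := by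
  induction n with
  | zero => simp [alternant, schurEval_fin_zero]
  | succ n ih =>
    rw [alternant_rhoPart_succ, schurEval_succ x hlam, alternant_rhoPart_add_succ x hlam,
      mul_assoc, mul_sum]
    refine congrArg _ (sum_congr rfl fun μ hμ => ?_)
    rw [mul_left_comm, ih _ (isPartition_of_mem_interlacing hμ)]

end Schur

/-- Corollary 3.4, the bialternant formula:
`a_ρ(x) · s_λ(x) = a_{ρ+λ}(x)`. -/
theorem bialternant_formula (n : ℕ) (hn : 1 ≤ n)
    (lam : Fin n → ℕ) (hlam : IsPartition lam) :
    avandX n (rhoPart n) * schurX n lam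
      = avandX n (fun j => rhoPart n j + lam j) := by
  exact bialternant_formula_general X hlam
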